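/- There exists a constant C > 0 such that for every ε ∈ (0, 1/4), every k ∈ ℕ, and every d ≥ 2, the inverse of the minimal k-dispersion satisfies N(ε, d) ≤ C · max{ log₂(d) · (log₂(1/ε)/ε)² , k · log₂(1/ε)/ε }. -/

import Mathlib

open MeasureTheory Finset
open scoped Classical

noncomputable section

/-- The `k`-dispersion of a finite point set `P ⊆ [0,1]^d`: the supremum of the volumes of
axis-parallel boxes inside `[0,1]^d` containing at most `k` points of `P`. -/
def kdisp (d k : ℕ) (P : Finset (Fin d → ℝ)) : ℝ :=
  sSup { v : ℝ | ∃ a b : Fin d → ℝ,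
    (∀ i, 0 ≤ a i ∧ a i ≤ b i ∧ b i ≤ 1) ∧
    (P.filter (fun x => ∀ i, x i ∈ Set.Ioo (a i) (b i))).card ≤ k ∧
    v = ∏ i, (b i - a i) }

/-- The minimal `k`-dispersion over all `n`-point subsets of `[0,1]^d`. -/
def kdispStar (d k n : ℕ) : ℝ :=
  sInf { v : ℝ | ∃ P : Finset (Fin d → ℝ),
    (∀ x ∈ P, ∀ i, x i ∈ Set.Icc (0:ℝ) 1) ∧ P.card = n ∧ v = kdisp d k P }

/-!
Cut each side of the cube into `q + 2` intervals of equal length, where `q ≈ 4 / ε`, and discard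
the outer two. A box of volume greater than `ε` has side lengths `l i` with
`∑ i, (1 - l i) ≤ log (1 / ε)`, so in all but `A ≈ q * log (1 / ε)` coordinates it spans all
remaining intervals: rounded inwards, it becomes one of at most `(d * q ^ 2) ^ A` discrete boxes.
Rounding costs at most half of the volume, because `∑ i, (1 / l i - 1) ≤ 1 / ε`. A random grid point
thus lies in a given discrete box with probability at least `ε / 2`, so for `N` independent points
`2 ^ (-#hits)` has mean at most `(1 - ε / 4) ^ N`, and some choice of `N` points hits every box more
than `k` times as soon as `(d * q ^ 2) ^ A * (1 - ε / 4) ^ N < 2 ^ (-k)`.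
-/

section Hits

variable {Ω κ : Type*} [Fintype Ω] [DecidableEq Ω] [Fintype κ]

theorem sum_half_pow_card_hits (E : Finset Ω) :
    ∑ f : κ → Ω, (1 / 2 : ℝ) ^ #{j | f j ∈ E} =
      ((Fintype.card Ω : ℝ) - #E / 2) ^ Fintype.card κ := by
  let w : Ω → ℝ := fun ω ↦ if ω ∈ E then 1 / 2 else 1
  have sum_w : ∑ ω, w ω = (Fintype.card Ω : ℝ) - #E / 2 := by
    have w_eq (ω : Ω) : w ω = 1 - if ω ∈ E then (1 / 2 : ℝ) else 0 := by
      simp only [w]; split_ifs <;> norm_num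
    simp [w_eq, sum_sub_distrib, div_eq_mul_inv]
  have pow_eq (f : κ → Ω) : (1 / 2 : ℝ) ^ #{j | f j ∈ E} = ∏ j, w (f j) := by
    simp [w, ← prod_filter]
  rw [← sum_w, ← card_univ, ← prod_const, Fintype.prod_sum]
  exact sum_congr rfl fun f _ ↦ pow_eq f

/- Averaging the sum over `𝓔` of `2 ^ (-#hits)` does the union bound and the tail bound at once. -/
theorem exists_forall_lt_card_hits [Nonempty Ω] {𝓔 : Finset (Finset Ω)} {p : ℝ} {k : ℕ}
    (hp : ∀ E ∈ 𝓔, p * Fintype.card Ω ≤ #E)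
    (h𝓔 : #𝓔 * (1 - p / 2) ^ Fintype.card κ < (1 / 2 : ℝ) ^ k) :
    ∃ f : κ → Ω, ∀ E ∈ 𝓔, k < #{j | f j ∈ E} := by
  have sum_lt : ∑ f : κ → Ω, ∑ E ∈ 𝓔, (1 / 2 : ℝ) ^ #{j | f j ∈ E} <
      ∑ _f : κ → Ω, (1 / 2 : ℝ) ^ k :=
    calc ∑ f : κ → Ω, ∑ E ∈ 𝓔, (1 / 2 : ℝ) ^ #{j | f j ∈ E}
        = ∑ E ∈ 𝓔, ((Fintype.card Ω : ℝ) - #E / 2) ^ Fintype.card κ := by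
          rw [sum_comm]
          exact sum_congr rfl fun E _ ↦ sum_half_pow_card_hits E
      _ ≤ ∑ _E ∈ 𝓔, (Fintype.card Ω * (1 - p / 2)) ^ Fintype.card κ := by
          refine sum_le_sum fun E hE ↦ pow_le_pow_left₀ ?_ ?_ _
          · have : (#E : ℝ) ≤ Fintype.card Ω := mod_cast card_le_univ E
            linarith [(#E).cast_nonneg (α := ℝ)]
          · linarith [hp E hE]
      _ = (Fintype.card Ω : ℝ) ^ Fintype.card κ * (#𝓔 * (1 - p / 2) ^ Fintype.card κ) := by
          rw [sum_const, nsmul_eq_mul, mul_pow]; ring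
      _ < (Fintype.card Ω : ℝ) ^ Fintype.card κ * (1 / 2) ^ k := by gcongr
      _ = ∑ _f : κ → Ω, (1 / 2 : ℝ) ^ k := by simp
  obtain ⟨f, -, hf⟩ := exists_lt_of_sum_lt sum_lt
  refine ⟨f, fun E hE ↦ ?_⟩
  have le_sum : (1 / 2 : ℝ) ^ #{j | f j ∈ E} ≤ ∑ E ∈ 𝓔, (1 / 2 : ℝ) ^ #{j | f j ∈ E} :=
    single_le_sum (f := fun E ↦ (1 / 2 : ℝ) ^ #{j | f j ∈ E}) (fun _ _ ↦ by positivity) hE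
  exact (pow_lt_pow_iff_right_of_lt_one₀ (by norm_num) (by norm_num)).1 (le_sum.trans_lt hf)

end Hits

section GridBoxes

theorem mem_iff_mem_Icc_min'_max' {α : Type*} [LinearOrder α] {s : Finset α}
    (hne : s.Nonempty) (hs : (s : Set α).OrdConnected) {c : α} :
    c ∈ s ↔ c ∈ Set.Icc (s.min' hne) (s.max' hne) :=
  ⟨fun hc ↦ ⟨s.min'_le c hc, s.le_max' c hc⟩, fun hc ↦ hs.out (s.min'_mem hne) (s.max'_mem hne) hc⟩

theorem exists_subset_range_of_card_le {ι : Type*} [Nonempty ι] {S : Finset ι} {A : ℕ}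
    (hS : #S ≤ A) : ∃ g : Fin A → ι, (S : Set ι) ⊆ Set.range g := by
  obtain ⟨e⟩ : Nonempty (S ↪ Fin A) := Function.Embedding.nonempty_of_card_le (by simpa using hS)
  exact ⟨Function.extend e Subtype.val fun _ ↦ Classical.arbitrary ι,
    fun i hi ↦ ⟨e ⟨i, hi⟩, e.injective.extend_apply _ _ _⟩⟩

variable {ι α : Type*} [Fintype ι] [DecidableEq ι] [Fintype α] [LinearOrder α]

variable (ι α) in
/-- The axis-parallel boxes in the grid `ι → α` that are cut out by at most `A` interval
constraints, the sets to which the probabilistic argument is applied. Each box is encoded by `A`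
triples `(i, lo, hi)`, read as `lo ≤ ω i ≤ hi`; repetitions make up for unused constraints. -/
def gridBoxes (A : ℕ) : Finset (Finset (ι → α)) :=
  univ.image fun T : Fin A → ι × α × α ↦
    ({ω | ∀ t, ω (T t).1 ∈ Set.Icc (T t).2.1 (T t).2.2} : Finset (ι → α))

theorem card_gridBoxes_le (A : ℕ) :
    #(gridBoxes ι α A) ≤ (Fintype.card ι * Fintype.card α ^ 2) ^ A :=
  card_image_le.trans_eq (by simp [sq])

theorem piFinset_mem_gridBoxes [Nonempty ι] {s : ι → Finset α} {A : ℕ}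
    (hne : ∀ i, (s i).Nonempty) (hs : ∀ i, (s i : Set α).OrdConnected)
    (hA : #{i | s i ≠ univ} ≤ A) : Fintype.piFinset s ∈ gridBoxes ι α A := by
  obtain ⟨g, hg⟩ := exists_subset_range_of_card_le hA
  refine mem_image.2
    ⟨fun t ↦ (g t, (s (g t)).min' (hne _), (s (g t)).max' (hne _)), mem_univ _, ?_⟩
  ext ω
  simp only [mem_filter_univ, Fintype.mem_piFinset, ← mem_iff_mem_Icc_min'_max' (hne _) (hs _)]
  refine ⟨fun h i ↦ ?_, fun h t ↦ h (g t)⟩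
  by_cases hi : s i = univ
  · simp [hi]
  · obtain ⟨t, rfl⟩ := hg (by simpa using hi)
    exact h t

end GridBoxes

section InnerCells

variable {q : ℕ} {a b θ θ' : ℝ} {c c' : Fin q}

/-- The cells of the grid on `[0, 1]` that lie in `[a, b]`. The unit interval is cut into `q + 2`
pieces of equal length and the two outer ones are discarded, so that `c : Fin q` stands for
`[(c + 1) / (q + 2), (c + 2) / (q + 2)]` and an interval of length close to `1` contains all
cells. -/
def innerCells (q : ℕ) (a b : ℝ) : Finset (Fin q) :=
  {c | (q + 2) * a ≤ c + 1 ∧ (c : ℝ) + 2 ≤ (q + 2) * b}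

theorem mem_innerCells :
    c ∈ innerCells q a b ↔ (q + 2) * a ≤ c + 1 ∧ (c : ℝ) + 2 ≤ (q + 2) * b :=
  mem_filter_univ c

theorem ordConnected_innerCells : (innerCells q a b : Set (Fin q)).OrdConnected := by
  refine ⟨fun x hx y hy z ⟨hxz, hzy⟩ ↦ mem_innerCells.2 ⟨?_, ?_⟩⟩
  · have : (x : ℝ) ≤ z := mod_cast hxz
    linarith [(mem_innerCells.1 hx).1]
  · have : (z : ℝ) ≤ y := mod_cast hzy
    linarith [(mem_innerCells.1 hy).2]

theorem le_card_innerCells (ha : 0 ≤ a) (hb : b ≤ 1) :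
    (q + 2) * (b - a) - 2 ≤ (#(innerCells q a b) : ℝ) := by
  set u := max 1 ⌈(q + 2) * a⌉₊
  set v := min (q + 1) ⌊(q + 2) * b⌋₊
  have Ico_subset : Ico u v ⊆ (innerCells q a b).image fun c : Fin q ↦ (c : ℕ) + 1 := by
    intro n hn
    obtain ⟨⟨hn1, hna⟩, hnq, hnb⟩ : (1 ≤ n ∧ ⌈(q + 2) * a⌉₊ ≤ n) ∧
        n < q + 1 ∧ n + 1 ≤ ⌊(q + 2) * b⌋₊ := by
      simpa [u, v, Nat.succ_le_iff] using hn
    obtain ⟨c, rfl⟩ := Nat.exists_eq_add_of_le' hn1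
    have hcb := (Nat.le_floor_iff' (by omega)).1 hnb
    push_cast at hcb
    refine mem_image.2 ⟨⟨c, by omega⟩, mem_innerCells.2 ⟨?_, by linarith⟩, rfl⟩
    exact_mod_cast Nat.ceil_le.1 hna
  have hvu : (v : ℝ) ≤ #(innerCells q a b) + u := by
    have := (card_le_card Ico_subset).trans card_image_le
    rw [Nat.card_Ico] at this
    exact_mod_cast Nat.sub_le_iff_le_add.1 this
  have hu : (u : ℝ) ≤ (q + 2) * a + 1 := by
    have : 0 ≤ (q + 2) * a := by positivity
    rw [Nat.cast_max, max_le_iff]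
    exact ⟨by simpa using this, (Nat.ceil_lt_add_one this).le⟩
  have hv : (q + 2) * b - 1 ≤ v := by
    rw [Nat.cast_min, le_min_iff]
    refine ⟨?_, (Nat.sub_one_lt_floor _).le⟩
    push_cast
    nlinarith
  linarith

/-- The point at relative position `θ` inside the cell `c` (see `innerCells`). -/
def cellPoint (c : Fin q) (θ : ℝ) : ℝ := (c + 1 + θ) / (q + 2)

theorem cellPoint_mem_Ioo (hc : c ∈ innerCells q a b) (hθ : θ ∈ Set.Ioo 0 1) :
    cellPoint c θ ∈ Set.Ioo a b := by
  obtain ⟨hac, hcb⟩ := mem_innerCells.1 hc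
  have hq : (0 : ℝ) < q + 2 := by positivity
  exact ⟨(lt_div_iff₀ hq).2 (by linarith [hθ.1]), (div_lt_iff₀ hq).2 (by linarith [hθ.2])⟩

theorem cellPoint_mem_Icc (hθ : θ ∈ Set.Ioo 0 1) : cellPoint c θ ∈ Set.Icc 0 1 := by
  have hc : (c : ℝ) + 1 ≤ q := mod_cast c.2
  have : c ∈ innerCells q 0 1 := mem_innerCells.2 ⟨by rw [mul_zero]; positivity, by linarith⟩
  exact Set.Ioo_subset_Icc_self (cellPoint_mem_Ioo this hθ)

theorem eq_of_cellPoint_eq (hθ : θ ∈ Set.Ioo 0 1) (hθ' : θ' ∈ Set.Ioo 0 1)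
    (h : cellPoint c θ = cellPoint c' θ') : θ = θ' := by
  have fract_eq {c : Fin q} {θ : ℝ} (hθ : θ ∈ Set.Ioo 0 1) :
      Int.fract (cellPoint c θ * (q + 2)) = θ := by
    have hq : (q : ℝ) + 2 ≠ 0 := by positivity
    rw [cellPoint, div_mul_cancel₀ _ hq, ← Nat.cast_succ, Int.fract_natCast_add,
      Int.fract_eq_self.2 ⟨hθ.1.le, hθ.2⟩]
  rw [← fract_eq hθ, h, fract_eq hθ']

end InnerCells

section GridPoints

variable {d q N : ℕ}

/-- The points of the unit cube realizing the grid points `f 0, …, f (N - 1)`. The relative position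
`(j + 1) / (N + 1)` inside the cells keeps them distinct when `f` is not injective. -/
def gridPoints (f : Fin N → Fin d → Fin q) : Finset (Fin d → ℝ) :=
  univ.image fun j i ↦ cellPoint (f j i) ((j + 1) / (N + 1))

theorem add_one_div_add_one_mem_Ioo (j : Fin N) : ((j : ℝ) + 1) / (N + 1) ∈ Set.Ioo 0 1 := by
  have : (j : ℝ) < N := mod_cast j.2
  exact ⟨by positivity, (div_lt_one (by positivity)).2 (by linarith)⟩

theorem gridPoints_injective (hd : 0 < d) (f : Fin N → Fin d → Fin q) :
    Function.Injective fun (j : Fin N) (i : Fin d) ↦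
      cellPoint (f j i) (((j : ℝ) + 1) / (N + 1)) := by
  intro j j' h
  have := eq_of_cellPoint_eq (add_one_div_add_one_mem_Ioo j) (add_one_div_add_one_mem_Ioo j')
    (congrFun h ⟨0, hd⟩)
  rw [div_left_inj' (by positivity), add_left_inj, Nat.cast_inj] at this
  exact Fin.ext this

theorem card_gridPoints (hd : 0 < d) (f : Fin N → Fin d → Fin q) : #(gridPoints f) = N := by
  rw [gridPoints, card_image_of_injective _ (gridPoints_injective hd f), card_univ,
    Fintype.card_fin]

theorem mem_Icc_of_mem_gridPoints {f : Fin N → Fin d → Fin q} {x : Fin d → ℝ}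
    (hx : x ∈ gridPoints f) (i : Fin d) : x i ∈ Set.Icc 0 1 := by
  obtain ⟨j, -, rfl⟩ := mem_image.1 hx
  exact cellPoint_mem_Icc (add_one_div_add_one_mem_Ioo j)

theorem card_hits_le_card_gridPoints_filter (hd : 0 < d) (f : Fin N → Fin d → Fin q)
    (a b : Fin d → ℝ) :
    #{j | f j ∈ Fintype.piFinset fun i ↦ innerCells q (a i) (b i)} ≤
      #{x ∈ gridPoints f | ∀ i, x i ∈ Set.Ioo (a i) (b i)} := by
  refine card_le_card_of_injOn _ (fun j hj ↦ ?_) (gridPoints_injective hd f).injOn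
  have hj := Fintype.mem_piFinset.1 ((mem_filter_univ j).1 hj)
  exact mem_filter.2 ⟨mem_image_of_mem _ (mem_univ j),
    fun i ↦ cellPoint_mem_Ioo (hj i) (add_one_div_add_one_mem_Ioo j)⟩

end GridPoints

section SideLengths

variable {ι : Type*}

theorem one_add_sum_le_prod_one_add {s : Finset ι} {y : ι → ℝ} (hy : ∀ i ∈ s, -1 ≤ y i)
    (hyy : ∀ i ∈ s, ∀ j ∈ s, 0 ≤ y i * y j) : 1 + ∑ i ∈ s, y i ≤ ∏ i ∈ s, (1 + y i) := by
  induction s using Finset.induction_on with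
  | empty => simp
  | insert a s ha ih =>
    have ih := ih (fun i hi ↦ hy i (mem_insert_of_mem hi)) fun i hi j hj ↦
      hyy i (mem_insert_of_mem hi) j (mem_insert_of_mem hj)
    have cross : 0 ≤ y a * ∑ i ∈ s, y i := by
      rw [mul_sum]
      exact sum_nonneg fun i hi ↦ hyy a (mem_insert_self a s) i (mem_insert_of_mem hi)
    have hya : 0 ≤ 1 + y a := by linarith [hy a (mem_insert_self a s)]
    rw [sum_insert ha, prod_insert ha]
    calc 1 + (y a + ∑ i ∈ s, y i) ≤ (1 + y a) * (1 + ∑ i ∈ s, y i) := by linarith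
      _ ≤ (1 + y a) * ∏ i ∈ s, (1 + y i) := by gcongr

theorem sum_one_sub_le_neg_log_prod {s : Finset ι} {l : ι → ℝ} (hl : ∀ i ∈ s, 0 < l i) :
    ∑ i ∈ s, (1 - l i) ≤ -Real.log (∏ i ∈ s, l i) := by
  rw [Real.log_prod fun i hi ↦ (hl i hi).ne', ← sum_neg_distrib]
  exact sum_le_sum fun i hi ↦ by linarith [Real.log_le_sub_one_of_pos (hl i hi)]

variable [Fintype ι] {l : ι → ℝ} {ε : ℝ}

theorem card_one_le_mul_one_sub_le (hl0 : ∀ i, 0 < l i) (hl1 : ∀ i, l i ≤ 1) (hε : 0 < ε)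
    (hεl : ε ≤ ∏ i, l i) {m : ℝ} (hm : 0 ≤ m) :
    (#{i | 1 ≤ m * (1 - l i)} : ℝ) ≤ m * Real.log (1 / ε) := by
  have nonneg (i : ι) : 0 ≤ m * (1 - l i) := mul_nonneg hm (sub_nonneg.2 (hl1 i))
  calc (#{i | 1 ≤ m * (1 - l i)} : ℝ)
      = ∑ i with 1 ≤ m * (1 - l i), 1 := by simp
    _ ≤ ∑ i with 1 ≤ m * (1 - l i), m * (1 - l i) := sum_le_sum fun i hi ↦ (mem_filter.1 hi).2
    _ ≤ ∑ i, m * (1 - l i) :=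
        sum_le_sum_of_subset_of_nonneg (filter_subset _ _) fun i _ _ ↦ nonneg i
    _ = m * ∑ i, (1 - l i) := by rw [mul_sum]
    _ ≤ m * Real.log (1 / ε) := by
        gcongr
        rw [one_div, Real.log_inv]
        exact (sum_one_sub_le_neg_log_prod fun i _ ↦ hl0 i).trans
          (neg_le_neg (Real.log_le_log hε hεl))

theorem inv_sub_one_nonneg {x : ℝ} (hx0 : 0 < x) (hx1 : x ≤ 1) : 0 ≤ x⁻¹ - 1 :=
  sub_nonneg.2 ((one_le_inv₀ hx0).2 hx1)

theorem sum_inv_sub_one_le_inv (hl0 : ∀ i, 0 < l i) (hl1 : ∀ i, l i ≤ 1) (hε : 0 < ε)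
    (hεl : ε ≤ ∏ i, l i) : ∑ i, ((l i)⁻¹ - 1) ≤ ε⁻¹ := by
  have nonneg (i : ι) : 0 ≤ (l i)⁻¹ - 1 := inv_sub_one_nonneg (hl0 i) (hl1 i)
  have bernoulli := one_add_sum_le_prod_one_add (s := univ) (y := fun i ↦ (l i)⁻¹ - 1)
    (fun i _ ↦ by linarith [nonneg i]) fun i _ j _ ↦ mul_nonneg (nonneg i) (nonneg j)
  simp only [add_sub_cancel, prod_inv_distrib] at bernoulli
  linarith [inv_anti₀ hε hεl]

theorem sum_two_div_mul_inv_sub_one_le_half (hl0 : ∀ i, 0 < l i) (hl1 : ∀ i, l i ≤ 1)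
    (hε : 0 < ε) (hεl : ε ≤ ∏ i, l i) {q : ℝ} (hq : 4 / ε ≤ q) :
    ∑ i, 2 / q * ((l i)⁻¹ - 1) ≤ 1 / 2 := by
  have sum_inv_nonneg : 0 ≤ ∑ i, ((l i)⁻¹ - 1) :=
    sum_nonneg fun i _ ↦ inv_sub_one_nonneg (hl0 i) (hl1 i)
  have sum_le := sum_inv_sub_one_le_inv hl0 hl1 hε hεl
  calc ∑ i, 2 / q * ((l i)⁻¹ - 1) = 2 / q * ∑ i, ((l i)⁻¹ - 1) := by rw [mul_sum]
    _ ≤ 2 / (4 / ε) * ε⁻¹ := by gcongr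
    _ = 1 / 2 := by field_simp; norm_num

theorem add_two_mul_sub_two_eq {q x : ℝ} (hq : q ≠ 0) (hx : x ≠ 0) :
    (q + 2) * x - 2 = q * (x * (1 + -(2 / q * (x⁻¹ - 1)))) := by
  field_simp
  ring

/- `(q + 2) * l i - 2` is the number of cells guaranteed by `le_card_innerCells`; the factors by
which it falls short of `q * l i` have product at least `1 / 2`. -/
theorem half_mul_pow_le_prod (hl0 : ∀ i, 0 < l i) (hl1 : ∀ i, l i ≤ 1) (hε : 0 < ε)
    (hεl : ε ≤ ∏ i, l i) {q : ℝ} (hq : 4 / ε ≤ q) :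
    (∀ i, 0 < (q + 2) * l i - 2) ∧
      ε / 2 * q ^ Fintype.card ι ≤ ∏ i, ((q + 2) * l i - 2) := by
  have hq0 : 0 < q := lt_of_lt_of_le (by positivity) hq
  set x : ι → ℝ := fun i ↦ 2 / q * ((l i)⁻¹ - 1)
  have x_nonneg (i : ι) : 0 ≤ x i :=
    mul_nonneg (by positivity) (inv_sub_one_nonneg (hl0 i) (hl1 i))
  have sum_x_le : ∑ i, x i ≤ 1 / 2 := sum_two_div_mul_inv_sub_one_le_half hl0 hl1 hε hεl hq
  have x_le (i : ι) : x i ≤ 1 / 2 :=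
    (single_le_sum (fun i _ ↦ x_nonneg i) (mem_univ i)).trans sum_x_le
  have factor (i : ι) : (q + 2) * l i - 2 = q * (l i * (1 + -x i)) :=
    add_two_mul_sub_two_eq hq0.ne' (hl0 i).ne'
  have half_le : 1 / 2 ≤ ∏ i, (1 + -x i) :=
    calc 1 / 2 ≤ 1 + ∑ i, -x i := by rw [sum_neg_distrib]; linarith
      _ ≤ ∏ i, (1 + -x i) := one_add_sum_le_prod_one_add (fun i _ ↦ by linarith [x_le i])
          fun i _ j _ ↦ by rw [neg_mul_neg]; exact mul_nonneg (x_nonneg i) (x_nonneg j)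
  have prod_pos : 0 < ∏ i, l i := hε.trans_le hεl
  refine ⟨fun i ↦ ?_, ?_⟩
  · rw [factor]
    exact mul_pos hq0 (mul_pos (hl0 i) (by linarith [x_le i]))
  · calc ε / 2 * q ^ Fintype.card ι = q ^ Fintype.card ι * (ε * (1 / 2)) := by ring
      _ ≤ q ^ Fintype.card ι * ((∏ i, l i) * ∏ i, (1 + -x i)) := by gcongr
      _ = ∏ i, ((q + 2) * l i - 2) := by
          simp only [factor, prod_mul_distrib, prod_const, card_univ]

end SideLengths

section LargeBoxes

variable {ι : Type*} [Fintype ι] [DecidableEq ι] {q : ℕ} {ε : ℝ} {a b : ι → ℝ}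

theorem half_mul_card_le_card_piFinset_innerCells (ha : ∀ i, 0 ≤ a i) (hab : ∀ i, a i < b i)
    (hb : ∀ i, b i ≤ 1) (hε : 0 < ε) (hvol : ε ≤ ∏ i, (b i - a i)) (hq : 4 / ε ≤ q) :
    ε / 2 * Fintype.card (ι → Fin q) ≤
      #(Fintype.piFinset fun i ↦ innerCells q (a i) (b i)) := by
  obtain ⟨pos, le_prod⟩ := half_mul_pow_le_prod (fun i ↦ sub_pos.2 (hab i))
    (fun i ↦ by linarith [ha i, hb i]) hε hvol hq
  rw [Fintype.card_piFinset, Fintype.card_fun, Fintype.card_fin]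
  push_cast
  exact le_prod.trans (prod_le_prod (fun i _ ↦ (pos i).le)
    fun i _ ↦ le_card_innerCells (ha i) (hb i))

theorem innerCells_eq_univ {a b : ℝ} (ha : 0 ≤ a) (hb : b ≤ 1)
    (hab : (q + 2) * (1 - (b - a)) < 1) : innerCells q a b = univ := by
  have lt_succ : (q : ℝ) < #(innerCells q a b) + 1 := by
    linarith [le_card_innerCells (q := q) ha hb]
  have q_le : q ≤ #(innerCells q a b) := Nat.lt_succ_iff.1 (mod_cast lt_succ)
  exact (card_eq_iff_eq_univ _).1 (le_antisymm (card_le_univ _) (by simpa using q_le))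

theorem piFinset_innerCells_mem_gridBoxes [Nonempty ι] (ha : ∀ i, 0 ≤ a i)
    (hab : ∀ i, a i < b i) (hb : ∀ i, b i ≤ 1) (hε : 0 < ε) (hvol : ε ≤ ∏ i, (b i - a i))
    (hq : 4 / ε ≤ q) {A : ℕ} (hA : (q + 2) * Real.log (1 / ε) < A + 1) :
    (Fintype.piFinset fun i ↦ innerCells q (a i) (b i)) ∈ gridBoxes ι (Fin q) A := by
  have length_pos (i : ι) : 0 < b i - a i := sub_pos.2 (hab i)
  have length_le (i : ι) : b i - a i ≤ 1 := by linarith [ha i, hb i]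
  refine piFinset_mem_gridBoxes (fun i ↦ ?_) (fun _ ↦ ordConnected_innerCells) ?_
  · have := (half_mul_pow_le_prod length_pos length_le hε hvol hq).1 i
    exact card_pos.1 (mod_cast this.trans_le (le_card_innerCells (ha i) (hb i)))
  · have constrained_le : #{i | innerCells q (a i) (b i) ≠ univ} ≤
        #{i | 1 ≤ ((q : ℝ) + 2) * (1 - (b i - a i))} :=
      card_le_card <| monotone_filter_right _ fun i _ (hi : innerCells q (a i) (b i) ≠ univ) ↦
        not_lt.1 fun h ↦ hi (innerCells_eq_univ (ha i) (hb i) h)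
    have card_le := card_one_le_mul_one_sub_le length_pos length_le hε hvol
      (by positivity : (0 : ℝ) ≤ q + 2)
    refine constrained_le.trans (Nat.lt_succ_iff.1 ?_)
    exact_mod_cast card_le.trans_lt hA

end LargeBoxes

section Dispersion

variable {d k : ℕ}

theorem kdisp_le {P : Finset (Fin d → ℝ)} {ε : ℝ} (hε : 0 ≤ ε)
    (h : ∀ a b : Fin d → ℝ, (∀ i, 0 ≤ a i ∧ a i ≤ b i ∧ b i ≤ 1) → ε < ∏ i, (b i - a i) →
      k < #{x ∈ P | ∀ i, x i ∈ Set.Ioo (a i) (b i)}) : kdisp d k P ≤ ε := by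
  refine Real.sSup_le ?_ hε
  rintro _ ⟨a, b, hab, hcard, rfl⟩
  exact not_lt.1 fun hvol ↦ (h a b hab hvol).not_ge hcard

theorem kdisp_nonneg (P : Finset (Fin d → ℝ)) : 0 ≤ kdisp d k P := by
  refine Real.sSup_nonneg ?_
  rintro _ ⟨a, b, hab, -, rfl⟩
  exact prod_nonneg fun i _ ↦ sub_nonneg.2 (hab i).2.1

theorem kdispStar_le_kdisp {P : Finset (Fin d → ℝ)} (hP : ∀ x ∈ P, ∀ i, x i ∈ Set.Icc (0 : ℝ) 1) :
    kdispStar d k #P ≤ kdisp d k P := by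
  refine csInf_le ⟨0, ?_⟩ ⟨P, hP, rfl, rfl⟩
  rintro _ ⟨Q, -, -, rfl⟩
  exact kdisp_nonneg Q

theorem kdispStar_le_of_mul_pow_lt {q A N : ℕ} {ε : ℝ} (hd : 0 < d) (hε : 0 < ε) (hε1 : ε ≤ 1)
    (hq : 4 / ε ≤ q) (hA : (q + 2) * Real.log (1 / ε) < A + 1)
    (hN : ((d : ℝ) * q ^ 2) ^ A * (1 - ε / 4) ^ N < (1 / 2 : ℝ) ^ k) :
    kdispStar d k N ≤ ε := by
  have hq0 : 0 < q := by
    have : (0 : ℝ) < q := lt_of_lt_of_le (by positivity) hq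
    exact_mod_cast this
  have : Nonempty (Fin d) := ⟨⟨0, hd⟩⟩
  have : Nonempty (Fin q) := ⟨⟨0, hq0⟩⟩
  let 𝓔 := {E ∈ gridBoxes (Fin d) (Fin q) A | ε / 2 * Fintype.card (Fin d → Fin q) ≤ (#E : ℝ)}
  have card_𝓔 : (#𝓔 : ℝ) ≤ (d * q ^ 2) ^ A := by
    have := (card_le_card (filter_subset _ _ : 𝓔 ⊆ _)).trans (card_gridBoxes_le A)
    simp only [Fintype.card_fin] at this
    exact_mod_cast this
  obtain ⟨f, hf⟩ : ∃ f : Fin N → Fin d → Fin q, ∀ E ∈ 𝓔, k < #{j | f j ∈ E} := by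
    refine exists_forall_lt_card_hits (fun E hE ↦ (mem_filter.1 hE).2) (lt_of_le_of_lt ?_ hN)
    have : 0 ≤ 1 - ε / 4 := by linarith
    rw [Fintype.card_fin, div_div]
    norm_num only
    gcongr
  rw [← card_gridPoints hd f]
  refine (kdispStar_le_kdisp fun x hx ↦ mem_Icc_of_mem_gridPoints hx).trans
    (kdisp_le hε.le fun a b hbox hvol ↦ ?_)
  have ha (i) : 0 ≤ a i := (hbox i).1
  have hb (i) : b i ≤ 1 := (hbox i).2.2
  have hab (i) : a i < b i := (hbox i).2.1.lt_of_ne fun h ↦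
    (hε.trans hvol).ne' (prod_eq_zero (mem_univ i) (sub_eq_zero.2 h.symm))
  have box_mem : (Fintype.piFinset fun i ↦ innerCells q (a i) (b i)) ∈ 𝓔 := mem_filter.2
    ⟨piFinset_innerCells_mem_gridBoxes ha hab hb hε hvol.le hq hA,
      half_mul_card_le_card_piFinset_innerCells ha hab hb hε hvol.le hq⟩
  exact (hf _ box_mem).trans_le (card_hits_le_card_gridPoints_filter hd f a b)

end Dispersion

section Parameters

theorem pow_mul_one_sub_pow_lt_half_pow {B x : ℝ} {A N k : ℕ} (hB : 0 < B) (hx : x ≤ 1)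
    (h : A * Real.log B + k < N * x) : B ^ A * (1 - x) ^ N < (1 / 2 : ℝ) ^ k := by
  have pow_le : (1 - x) ^ N ≤ Real.exp (-(N * x)) := by
    rw [← mul_neg, Real.exp_nat_mul]
    exact pow_le_pow_left₀ (by linarith) (Real.one_sub_le_exp_neg x) N
  have exp_le : Real.exp (-k) ≤ (1 / 2 : ℝ) ^ k := by
    rw [← mul_neg_one, Real.exp_nat_mul]
    exact pow_le_pow_left₀ (Real.exp_pos _).le Real.exp_neg_one_lt_half.le k
  calc B ^ A * (1 - x) ^ N ≤ Real.exp (A * Real.log B) * Real.exp (-(N * x)) := by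
        rw [Real.exp_nat_mul, Real.exp_log hB]
        gcongr
    _ = Real.exp (A * Real.log B - N * x) := by rw [← Real.exp_add, sub_eq_add_neg]
    _ < Real.exp (-k) := Real.exp_lt_exp.2 (by linarith)
    _ ≤ (1 / 2 : ℝ) ^ k := exp_le

theorem log_le_logb_two {x : ℝ} (hx : 1 ≤ x) : Real.log x ≤ Real.logb 2 x :=
  le_div_self (Real.log_nonneg hx) (Real.log_pos one_lt_two)
    (Real.log_two_lt_d9.le.trans (by norm_num))

theorem one_le_logb_two {x : ℝ} (hx : 2 ≤ x) : 1 ≤ Real.logb 2 x := by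
  rwa [Real.le_logb_iff_rpow_le one_lt_two (by linarith), Real.rpow_one]

theorem mul_log_mul_sq_le {ε d q A : ℝ} (hε : 0 < ε) (hε2 : ε ≤ 1 / 2) (hd : 2 ≤ d)
    (hq0 : 0 < q) (hq : q ≤ 4 / ε + 1) (hA0 : 0 ≤ A) (hA : A ≤ (q + 2) * Real.log (1 / ε)) :
    A * Real.log (d * q ^ 2) ≤ 54 * ε * (Real.logb 2 d * (Real.logb 2 (1 / ε) / ε) ^ 2) := by
  set L := Real.logb 2 (1 / ε)
  set D := Real.logb 2 d
  have he : 2 ≤ 1 / ε := (le_div_iff₀ hε).2 (by linarith)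
  have hL : 1 ≤ L := one_le_logb_two he
  have hD : 1 ≤ D := one_le_logb_two hd
  have hRL : Real.log (1 / ε) ≤ L := log_le_logb_two (by linarith)
  have hq' : q ≤ 4 * (1 / ε) + 1 := by rwa [mul_one_div]
  have A_le : A ≤ 6 * (1 / ε) * L := by
    refine hA.trans (mul_le_mul (by linarith) hRL (Real.log_nonneg (by linarith)) (by positivity))
  have log_q_le : Real.log q ≤ 4 * L := by
    have q_le : q ≤ (1 / ε) ^ 4 := by
      have : 2 ^ 3 ≤ (1 / ε) ^ 3 := by gcongr
      nlinarith
    have := Real.log_le_log hq0 q_le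
    rw [Real.log_pow] at this
    push_cast at this
    linarith
  have log_le : Real.log (d * q ^ 2) ≤ 9 * (D * L) := by
    rw [Real.log_mul (by positivity) (by positivity), Real.log_pow]
    push_cast
    linarith [log_le_logb_two (by linarith : 1 ≤ d),
      le_mul_of_one_le_right (by linarith : 0 ≤ D) hL,
      le_mul_of_one_le_left (by linarith : 0 ≤ L) hD]
  calc A * Real.log (d * q ^ 2) ≤ A * (9 * (D * L)) := by gcongr
    _ ≤ 6 * (1 / ε) * L * (9 * (D * L)) := by gcongr
    _ = 54 * ε * (D * (L / ε) ^ 2) := by field_simp; norm_num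

end Parameters

theorem statement_10_general {ε : ℝ} (hε : 0 < ε) (hε2 : ε ≤ 1 / 2) (k : ℕ) {d : ℕ} (hd : 2 ≤ d) :
    ∃ N : ℕ, kdispStar d k N ≤ ε ∧
      (N : ℝ) ≤ 221 * max (Real.logb 2 d * (Real.logb 2 (1 / ε) / ε) ^ 2)
        (k * Real.logb 2 (1 / ε) / ε) := by
  have he : 2 ≤ 1 / ε := (le_div_iff₀ hε).2 (by linarith)
  have hd' : (2 : ℝ) ≤ d := mod_cast hd
  have hL := one_le_logb_two he
  set q := ⌈4 / ε⌉₊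
  set A := ⌊(q + 2) * Real.log (1 / ε)⌋₊
  set X := Real.logb 2 d * (Real.logb 2 (1 / ε) / ε) ^ 2
  set Y := k * Real.logb 2 (1 / ε) / ε
  set N := ⌊216 * X + 4 * Y⌋₊ + 1
  have hq : 4 / ε ≤ q := Nat.le_ceil _
  have hq0 : (0 : ℝ) < q := lt_of_lt_of_le (by positivity) hq
  have entropy : A * Real.log (d * q ^ 2) ≤ 54 * ε * X := by
    refine mul_log_mul_sq_le hε hε2 hd' hq0 (Nat.ceil_lt_add_one (by positivity)).le (by positivity)
      (Nat.floor_le ?_)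
    exact mul_nonneg (by positivity) (Real.log_nonneg (by linarith))
  have k_le : k ≤ ε * Y := by
    rw [mul_div_cancel₀ _ hε.ne']
    exact le_mul_of_one_le_right k.cast_nonneg hL
  have one_le_X : 1 ≤ X := by
    refine one_le_mul_of_one_le_of_one_le (one_le_logb_two hd') (one_le_pow₀ ?_)
    exact (one_le_div hε).2 (by linarith)
  have lt_N : 216 * X + 4 * Y < N := by exact_mod_cast Nat.lt_floor_add_one _
  refine ⟨N, kdispStar_le_of_mul_pow_lt (by omega) hε (by linarith) hq (Nat.lt_floor_add_one _)
    (pow_mul_one_sub_pow_lt_half_pow (by positivity) (by linarith) ?_), ?_⟩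
  · nlinarith
  · have : (N : ℝ) ≤ 216 * X + 4 * Y + 1 := by
      have : 0 ≤ Y := by positivity
      push_cast [N]
      linarith [Nat.floor_le (by positivity : 0 ≤ 216 * X + 4 * Y)]
    linarith [le_max_left X Y, le_max_right X Y]

/-- There is a constant `C > 0` such that for every `ε ∈ (0,1/4)`, every `k ∈ ℕ` and every
`d ≥ 2`, the inverse of the minimal `k`-dispersion `N(ε,d) = min{N : k-disp*(N,d) ≤ ε}`
satisfies `N(ε,d) ≤ C · max{ log₂(d) · (log₂(1/ε)/ε)², k · log₂(1/ε)/ε }`. -/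
theorem statement_10 :
    ∃ C : ℝ, 0 < C ∧ ∀ ε : ℝ, 0 < ε → ε < 1 / 4 → ∀ k d : ℕ, 1 ≤ k → 2 ≤ d →
      ((sInf { N : ℕ | kdispStar d k N ≤ ε } : ℕ) : ℝ)
        ≤ C * max (Real.logb 2 d * (Real.logb 2 (1 / ε) / ε) ^ 2)
            ((k : ℝ) * Real.logb 2 (1 / ε) / ε) := by
  refine ⟨221, by norm_num, fun ε hε hε4 k d _ hd ↦ ?_⟩
  obtain ⟨N, hN, hle⟩ := statement_10_general hε (by linarith) k hd
  exact (Nat.cast_le.2 (Nat.sInf_le hN)).trans hle
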